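/- arXiv:math/0504061 — 4 statements merged into one kernel-verified Lean document; each statement's English description precedes it below -/
import Mathlib

section
/- Let n ≥ 2 and let (u_ε) be a moderate net of smooth functions on ℝ^n. Suppose that for every fixed standard rotation A ∈ SO(n,ℝ) the net x ↦ u_ε(Ax) − u_ε(x) is negligible on ℝ^n. Then for all 1 ≤ i < j ≤ n the net x ↦ x_i ∂u_ε/∂x_j(x) − x_j ∂u_ε/∂x_i(x) is negligible on ℝ^n. In other words, standard rotations suffice to characterize rotational invariance of Colombeau generalized functions. -/
/-!
Write `L x = x_i e_j - x_j e_i` for the generator of the rotations `R θ` in the `(i, j)`-plane, so that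
`x_i ∂_j u - x_j ∂_i u = D u` with `D u x = Du(x)(L x)` and `d/dθ u(R θ x) = (D u)(R θ x)`.

The hypothesis gives no uniformity in the rotation; the Baire category theorem supplies it
(`uniform_of_pointwise`). On a compact set `K` stable under all `R θ` and for a fixed exponent `m`,
the line of angles is the union over `k` of the closed sets of those `θ` for which
`|u_ε(R θ x) - u_ε(x)| ≤ (k + 1) ε ^ m` on `K` whenever `ε < 1 / (k + 1)`. One of them contains an
interval around some angle `a`, and composing with `R (-a)` moves this interval to the origin.

The operator `D` preserves moderateness (`moderate_rotDeriv`), so `D (D u)`, which is the second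
derivative of `θ ↦ u(R θ x)`, is `O(ε ^ (-p))` on `K`. A function with small increments and a moderate
second derivative has a small first derivative (`deriv_le_of_increment`): a step of length
`ε ^ (q + p + 1)` with `m = 2 q + p + 1` gives `|D u| = O(ε ^ q)`.
-/

open Topology Filter Set Matrix

/-- A net of smooth real-valued functions on a normed space is moderate: on each compact
set, every iterated derivative grows at most like some negative power of `ε`. -/
def ModerateF {E : Type*} [NormedAddCommGroup E] [NormedSpace ℝ E]
    (u : ℝ → E → ℝ) : Prop :=
  ∀ K : Set E, IsCompact K → ∀ k : ℕ, ∃ p : ℕ, ∃ C > (0:ℝ), ∃ ε₀ > (0:ℝ),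
    ∀ ε : ℝ, 0 < ε → ε < ε₀ → ∀ x ∈ K, ‖iteratedFDeriv ℝ k (u ε) x‖ ≤ C / ε ^ p

/-- A net of smooth real-valued functions is negligible: it is moderate and its values
are `O(ε^m)` for every `m` uniformly on compact sets. -/
def NegligibleF {E : Type*} [NormedAddCommGroup E] [NormedSpace ℝ E]
    (u : ℝ → E → ℝ) : Prop :=
  ModerateF u ∧ ∀ K : Set E, IsCompact K → ∀ m : ℕ, ∃ C > (0:ℝ), ∃ ε₀ > (0:ℝ),
    ∀ ε : ℝ, 0 < ε → ε < ε₀ → ∀ x ∈ K, |u ε x| ≤ C * ε ^ m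

/-! ### Moderate bounds and the derivative along a linear field -/

/-- A net of real functions bounded above on `K` by some negative power of `ε`, for small `ε`. -/
def ModBound {E : Type*} (K : Set E) (a : ℝ → E → ℝ) : Prop :=
  ∃ p : ℕ, ∃ C > (0:ℝ), ∃ ε₀ > (0:ℝ), ∀ ε : ℝ, 0 < ε → ε < ε₀ → ∀ x ∈ K, a ε x ≤ C / ε ^ p

theorem ModBound.add {E : Type*} {K : Set E} {a b : ℝ → E → ℝ}
    (ha : ModBound K a) (hb : ModBound K b) : ModBound K (fun ε x => a ε x + b ε x) := by
  obtain ⟨p, C, hC, e, he, h⟩ := ha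
  obtain ⟨p', C', hC', e', he', h'⟩ := hb
  refine ⟨p + p', C + C', by positivity, min 1 (min e e'), by positivity, ?_⟩
  intro ε h0 h1 x hx
  simp only [lt_min_iff] at h1
  have k1 : C / ε ^ p ≤ C / ε ^ (p + p') :=
    div_le_div_of_nonneg_left hC.le (by positivity)
      (pow_le_pow_of_le_one h0.le h1.1.le (by omega))
  have k2 : C' / ε ^ p' ≤ C' / ε ^ (p + p') :=
    div_le_div_of_nonneg_left hC'.le (by positivity)
      (pow_le_pow_of_le_one h0.le h1.1.le (by omega))
  have := h ε h0 h1.2.1 x hx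
  have := h' ε h0 h1.2.2 x hx
  rw [add_div]
  linarith

theorem ModBound.sum {E ι : Type*} {K : Set E} (s : Finset ι) {a : ι → ℝ → E → ℝ}
    (ha : ∀ i ∈ s, ModBound K (a i)) : ModBound K (fun ε x => ∑ i ∈ s, a i ε x) := by
  classical
  induction s using Finset.induction_on with
  | empty =>
    refine ⟨0, 1, one_pos, 1, one_pos, ?_⟩
    intro ε h0 h1 x hx
    simp
  | insert i s hi ih =>
    simp only [Finset.sum_insert hi]
    exact (ha i (by simp)).add (ih fun k hk => ha k (by simp [hk]))

section

variable {E : Type*} [NormedAddCommGroup E] [NormedSpace ℝ E]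

/-- The derivative of `f` along the linear vector field `L`. -/
noncomputable def rotDeriv (L : E →L[ℝ] E) (f : E → ℝ) (x : E) : ℝ := fderiv ℝ f x (L x)

theorem contDiff_rotDeriv (L : E →L[ℝ] E) {f : E → ℝ} (hf : ContDiff ℝ (⊤ : ℕ∞) f) :
    ContDiff ℝ (⊤ : ℕ∞) (rotDeriv L f) :=
  (hf.fderiv_right (m := (⊤ : ℕ∞)) (by norm_cast)).clm_apply L.contDiff

/-- By the Leibniz rule, the `k`-th derivative of `x ↦ Du(x)(L x)` is controlled by the derivatives
of `u` up to order `k + 1` and the derivatives of `L`, which are bounded on compact sets. -/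
theorem moderate_rotDeriv (L : E →L[ℝ] E) {u : ℝ → E → ℝ}
    (hus : ∀ ε ∈ Set.Ioc (0:ℝ) 1, ContDiff ℝ (⊤ : ℕ∞) (u ε)) (hu : ModerateF u) :
    ModerateF (fun ε => rotDeriv L (u ε)) := by
  intro K hK k
  have key : ∀ l ∈ Finset.range (k + 1), ModBound K (fun ε x =>
      (k.choose l : ℝ) * ‖iteratedFDeriv ℝ (l + 1) (u ε) x‖ * ‖iteratedFDeriv ℝ (k - l) L x‖) := by
    intro l _
    obtain ⟨p, C, hC, e, he, h⟩ := hu K hK (l + 1)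
    have hL : Continuous (iteratedFDeriv ℝ (k - l) (L : E → E)) :=
      L.contDiff.continuous_iteratedFDeriv le_rfl
    obtain ⟨M, hM⟩ := hK.exists_bound_of_continuousOn hL.continuousOn
    refine ⟨p, (k.choose l + 1) * C * (|M| + 1), by positivity, e, he, ?_⟩
    intro ε h0 h1 x hx
    have h2 := h ε h0 h1 x hx
    have h3 : ‖iteratedFDeriv ℝ (k - l) L x‖ ≤ |M| + 1 := by
      linarith [hM x hx, le_abs_self M]
    calc (k.choose l : ℝ) * ‖iteratedFDeriv ℝ (l + 1) (u ε) x‖ * ‖iteratedFDeriv ℝ (k - l) L x‖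
        ≤ ((k.choose l : ℝ) + 1) * (C / ε ^ p) * (|M| + 1) := by
            gcongr
            linarith
      _ = _ := by ring
  obtain ⟨p, C, hC, e, he, h⟩ := ModBound.sum _ key
  refine ⟨p, C, hC, min e 1, by positivity, ?_⟩
  intro ε h0 h1 x hx
  simp only [lt_min_iff] at h1
  refine le_trans ?_ (h ε h0 h1.1 x hx)
  have hs := hus ε ⟨h0, h1.2.le⟩
  have hf : ContDiff ℝ (⊤ : ℕ∞) (fderiv ℝ (u ε)) :=
    hs.fderiv_right (m := (⊤ : ℕ∞)) (by norm_cast)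
  have := norm_iteratedFDeriv_clm_apply (𝕜 := ℝ) (n := k) (N := (⊤ : ℕ∞)) (x := x)
    hf L.contDiff (by exact_mod_cast (le_top : (k : ℕ∞) ≤ ⊤))
  simp only [norm_iteratedFDeriv_fderiv] at this
  exact this

end

/-! ### Interpolation between increments and second derivatives -/

/-- A small increment over a step `t` and a bounded second derivative force a small derivative. -/
theorem deriv_le_of_increment {g g' g'' : ℝ → ℝ} (h1 : ∀ s, HasDerivAt g (g' s) s)
    (h2 : ∀ s, HasDerivAt g' (g'' s) s) {a B t : ℝ} (ht : 0 < t)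
    (hB : ∀ s, |g'' s| ≤ B) (ha : |g t - g 0| ≤ a) : |g' 0| ≤ a / t + B * t := by
  obtain ⟨s, hs, hs'⟩ := exists_hasDerivAt_eq_slope g g' ht
    (fun x _ => (h1 x).continuousAt.continuousWithinAt) (fun x _ => h1 x)
  have e1 : |g' s| ≤ a / t := by
    rw [hs', sub_zero, abs_div, abs_of_pos ht]
    gcongr
  have e2 : |g' s - g' 0| ≤ B * |s - 0| := by
    have := Convex.norm_image_sub_le_of_norm_hasDerivWithin_le (s := Set.univ) (x := 0) (y := s)
      (fun x _ => (h2 x).hasDerivWithinAt) (fun x _ => hB x) convex_univ trivial trivial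
    simpa using this
  have hB0 : 0 ≤ B := (abs_nonneg _).trans (hB 0)
  have e3 : B * |s - 0| ≤ B * t := by
    rw [sub_zero, abs_of_pos hs.1]
    exact mul_le_mul_of_nonneg_left hs.2.le hB0
  have e4 : |g' 0| ≤ |g' s| + |g' s - g' 0| := by
    have := abs_sub (g' s) (g' s - g' 0)
    simpa using this
  linarith

/-! ### Rotations in a coordinate plane -/

section Rotation

variable {n : ℕ}

/-- The generator of the rotations in the `(i, j)`-plane: it sends `e_i` to `e_j`, `e_j` to `-e_i`. -/
def planeGen (i j : Fin n) : Matrix (Fin n) (Fin n) ℝ := single j i 1 - single i j 1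

/-- The orthogonal projection onto the `(i, j)`-plane. -/
def planeProj (i j : Fin n) : Matrix (Fin n) (Fin n) ℝ := single i i 1 + single j j 1

/-- The rotation by the angle `θ` in the `(i, j)`-plane. -/
noncomputable def planeRot (i j : Fin n) (θ : ℝ) : Matrix (Fin n) (Fin n) ℝ :=
  1 + (Real.cos θ - 1) • planeProj i j + Real.sin θ • planeGen i j

variable {i j : Fin n}

theorem gen_mul_gen (h : i ≠ j) : planeGen i j * planeGen i j = -planeProj i j := by
  simp [planeGen, planeProj, sub_mul, mul_sub, h, h.symm]
  abel

theorem proj_mul_proj (h : i ≠ j) : planeProj i j * planeProj i j = planeProj i j := by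
  simp [planeProj, add_mul, mul_add, h, h.symm]

theorem gen_mul_proj (h : i ≠ j) : planeGen i j * planeProj i j = planeGen i j := by
  simp [planeGen, planeProj, sub_mul, mul_add, h, h.symm]
  abel

theorem proj_mul_gen (h : i ≠ j) : planeProj i j * planeGen i j = planeGen i j := by
  simp [planeGen, planeProj, add_mul, mul_sub, h, h.symm]

theorem rot_zero : planeRot i j 0 = 1 := by simp [planeRot]

theorem rot_add (h : i ≠ j) (s t : ℝ) :
    planeRot i j (s + t) = planeRot i j s * planeRot i j t := by
  simp only [planeRot, add_mul, mul_add, one_mul, mul_one, smul_mul_assoc, mul_smul_comm,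
    gen_mul_gen h, proj_mul_proj h, gen_mul_proj h, proj_mul_gen h, Real.cos_add, Real.sin_add]
  module

theorem rot_transpose (t : ℝ) : (planeRot i j t)ᵀ = planeRot i j (-t) := by
  simp only [planeRot, planeProj, planeGen, transpose_add, transpose_sub, transpose_smul,
    transpose_one, transpose_single, Real.cos_neg, Real.sin_neg]
  module

theorem rot_orth (h : i ≠ j) (t : ℝ) : (planeRot i j t)ᵀ * planeRot i j t = 1 := by
  rw [rot_transpose, ← rot_add h, neg_add_cancel, rot_zero]

/-- `R t = R (t / 2) ^ 2` has a nonnegative determinant, and orthogonality leaves only `1`. -/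
theorem rot_det (h : i ≠ j) (t : ℝ) : (planeRot i j t).det = 1 := by
  have h1 := congrArg Matrix.det (rot_orth h (t / 2))
  rw [det_mul, det_transpose, det_one] at h1
  rw [← add_halves t, rot_add h, det_mul, h1]

theorem hasDerivAt_rot (h : i ≠ j) (x : Fin n → ℝ) (t : ℝ) :
    HasDerivAt (fun s => planeRot i j s *ᵥ x) (planeGen i j *ᵥ (planeRot i j t *ᵥ x)) t := by
  have e : planeGen i j *ᵥ (planeRot i j t *ᵥ x) =
      (-Real.sin t) • (planeProj i j *ᵥ x) + Real.cos t • (planeGen i j *ᵥ x) := by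
    rw [mulVec_mulVec, planeRot, mul_add, mul_add, mul_smul_comm, mul_smul_comm, mul_one,
      gen_mul_gen h, gen_mul_proj h]
    simp only [add_mulVec, smul_mulVec, neg_mulVec]
    module
  rw [e]
  simp only [planeRot, add_mulVec, smul_mulVec, one_mulVec]
  exact ((((Real.hasDerivAt_cos t).sub_const 1).smul_const _).const_add x).add
    ((Real.hasDerivAt_sin t).smul_const _)

theorem gen_mulVec (x : Fin n → ℝ) :
    planeGen i j *ᵥ x = x i • Pi.single j (1:ℝ) - x j • Pi.single i (1:ℝ) := by
  rw [planeGen, sub_mulVec]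
  ext k
  simp [single_mulVec, Pi.single_apply, Function.update_apply]

end Rotation

/-! ### Compact sets stable under rotations -/

/-- The closed Euclidean ball of squared radius `r`; unlike the balls of the sup norm carried by
`Fin n → ℝ`, it is stable under rotations. -/
def euclBall (n : ℕ) (r : ℝ) : Set (Fin n → ℝ) := {x | x ⬝ᵥ x ≤ r}

theorem isCompact_euclBall (n : ℕ) (r : ℝ) : IsCompact (euclBall n r) := by
  refine Metric.isCompact_of_isClosed_isBounded ?_ ?_
  · refine isClosed_le ?_ continuous_const
    simp only [dotProduct]
    fun_prop
  · refine (Metric.isBounded_closedBall (x := (0 : Fin n → ℝ)) (r := |r| + 1)).subset ?_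
    intro x hx
    rw [mem_closedBall_zero_iff, pi_norm_le_iff_of_nonneg (by positivity)]
    intro k
    have h1 : x k * x k ≤ x ⬝ᵥ x :=
      Finset.single_le_sum (f := fun k => x k * x k) (fun k _ => mul_self_nonneg _)
        (Finset.mem_univ k)
    have h2 : x k * x k ≤ |r| := h1.trans (le_trans hx (le_abs_self r))
    rw [Real.norm_eq_abs]
    refine abs_le_of_sq_le_sq ?_ (by positivity)
    nlinarith [abs_nonneg r]

theorem exists_subset_euclBall {n : ℕ} {K : Set (Fin n → ℝ)} (hK : IsCompact K) :
    ∃ r, K ⊆ euclBall n r := by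
  have hc : Continuous (fun x : Fin n → ℝ => x ⬝ᵥ x) := by
    simp only [dotProduct]
    fun_prop
  obtain ⟨r, hr⟩ := hK.exists_bound_of_continuousOn hc.continuousOn
  exact ⟨r, fun x hx => (le_abs_self _).trans (hr x hx)⟩

theorem rot_mem_euclBall {n : ℕ} {i j : Fin n} (h : i ≠ j) {r : ℝ} (t : ℝ) {x : Fin n → ℝ}
    (hx : x ∈ euclBall n r) : planeRot i j t *ᵥ x ∈ euclBall n r := by
  have : (planeRot i j t *ᵥ x) ⬝ᵥ (planeRot i j t *ᵥ x) = x ⬝ᵥ x := by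
    rw [dotProduct_mulVec, ← mulVec_transpose, mulVec_mulVec, rot_orth h, one_mulVec]
  simpa [euclBall, this] using hx

/-! ### Uniformity in the angle -/

/-- Baire category: negligibility for each single rotation is uniform over small angles. -/
theorem uniform_of_pointwise {n : ℕ} {i j : Fin n} (h : i ≠ j) {u : ℝ → (Fin n → ℝ) → ℝ}
    (hus : ∀ ε ∈ Set.Ioc (0:ℝ) 1, ContDiff ℝ (⊤ : ℕ∞) (u ε))
    (hinv : ∀ A : Matrix (Fin n) (Fin n) ℝ, Aᵀ * A = 1 → A.det = 1 →
      NegligibleF (fun ε x => u ε (A.mulVec x) - u ε x)) (r : ℝ) (m : ℕ) :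
    ∃ C > (0:ℝ), ∃ ε₀ > (0:ℝ), ∃ δ > (0:ℝ), ∀ ε, 0 < ε → ε < ε₀ → ∀ t, 0 < t → t < δ →
      ∀ x ∈ euclBall n r, |u ε (planeRot i j t *ᵥ x) - u ε x| ≤ C * ε ^ m := by
  let F : ℕ → Set ℝ := fun k => {θ | ∀ ε, 0 < ε → ε < 1 / ((k:ℝ) + 1) → ∀ x ∈ euclBall n r,
    |u ε (planeRot i j θ *ᵥ x) - u ε x| ≤ ((k:ℝ) + 1) * ε ^ m}
  have hclosed : ∀ k, IsClosed (F k) := by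
    intro k
    simp only [F, Set.ofPred_forall]
    refine isClosed_iInter fun ε => isClosed_iInter fun h0 => isClosed_iInter fun h1 =>
      isClosed_iInter fun x => isClosed_iInter fun hx => isClosed_le ?_ continuous_const
    have h2 : (1:ℝ) / (k + 1) ≤ 1 := by
      rw [div_le_one (by positivity)]
      linarith [Nat.cast_nonneg (α := ℝ) k]
    have hu := (hus ε ⟨h0, (h1.trans_le h2).le⟩).continuous
    have hR : Continuous (fun θ => planeRot i j θ *ᵥ x) :=
      continuous_iff_continuousAt.2 fun t => (hasDerivAt_rot h x t).continuousAt
    exact ((hu.comp hR).sub continuous_const).abs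
  have hcover : ⋃ k, F k = Set.univ := by
    refine Set.eq_univ_of_forall fun θ => Set.mem_iUnion.2 ?_
    obtain ⟨C, hC, e, he, hb⟩ := (hinv _ (rot_orth h θ) (rot_det h θ)).2 _
      (isCompact_euclBall n r) m
    obtain ⟨k, hk⟩ := exists_nat_gt (max C (1 / e))
    rw [max_lt_iff] at hk
    refine ⟨k, fun ε h0 h1 x hx => ?_⟩
    have h2 : ε < e := by
      refine h1.trans_le ?_
      rw [div_le_iff₀ (by positivity)]
      have := (div_lt_iff₀ he).1 hk.2
      nlinarith
    refine (hb ε h0 h2 x hx).trans ?_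
    gcongr
    linarith
  obtain ⟨k, a, ha⟩ := nonempty_interior_of_iUnion_of_closed hclosed hcover
  obtain ⟨δ, hδ, hball⟩ := Metric.mem_nhds_iff.1 (mem_interior_iff_mem_nhds.1 ha)
  refine ⟨2 * ((k:ℝ) + 1), by positivity, 1 / ((k:ℝ) + 1), by positivity, δ, hδ, ?_⟩
  intro ε h0 h1 t ht htδ x hx
  have hy := rot_mem_euclBall h (-a) hx
  have k1 := hball (Metric.mem_ball_self hδ) ε h0 h1 _ hy
  have k2 := hball (show a + t ∈ Metric.ball a δ by
    simpa [Real.dist_eq, abs_of_pos ht] using htδ) ε h0 h1 _ hy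
  rw [mulVec_mulVec, ← rot_add h] at k1 k2
  have e1 : a + -a = 0 := by ring
  have e2 : a + t + -a = t := by ring
  rw [e1, rot_zero, one_mulVec] at k1
  rw [e2] at k2
  rw [abs_le] at *
  constructor <;> linarith [k1.1, k1.2, k2.1, k2.2]

/-- if a moderate net `(u_ε)` of smooth functions on `ℝ^n` (`n ≥ 2`) is
invariant under every fixed standard rotation `A ∈ SO(n,ℝ)`, then all infinitesimal
rotational derivatives `x_i ∂_j u - x_j ∂_i u` are negligible: standard rotations
suffice to characterize rotational invariance. -/
theorem stmt13 {n : ℕ} (hn : 2 ≤ n)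
    (u : ℝ → (Fin n → ℝ) → ℝ)
    (hus : ∀ ε ∈ Set.Ioc (0:ℝ) 1, ContDiff ℝ (⊤ : ℕ∞) (u ε))
    (humod : ModerateF u)
    (hinv : ∀ A : Matrix (Fin n) (Fin n) ℝ, Aᵀ * A = 1 → A.det = 1 →
      NegligibleF (fun ε x => u ε (A.mulVec x) - u ε x)) :
    ∀ i j : Fin n, i < j →
      NegligibleF (fun ε x => x i * fderiv ℝ (u ε) x (Pi.single j (1:ℝ)) -
        x j * fderiv ℝ (u ε) x (Pi.single i (1:ℝ))) := by
  intro i j hij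
  have h : i ≠ j := hij.ne
  let L : (Fin n → ℝ) →L[ℝ] (Fin n → ℝ) := (planeGen i j).mulVecLin.toContinuousLinearMap
  have hL : ∀ x, L x = planeGen i j *ᵥ x := fun x => rfl
  have hD : (fun ε x => x i * fderiv ℝ (u ε) x (Pi.single j (1:ℝ)) -
        x j * fderiv ℝ (u ε) x (Pi.single i (1:ℝ))) = fun ε => rotDeriv L (u ε) := by
    ext ε x
    rw [rotDeriv, hL, gen_mulVec]
    simp
  rw [hD]
  have hus1 : ∀ ε ∈ Set.Ioc (0:ℝ) 1, ContDiff ℝ (⊤ : ℕ∞) (rotDeriv L (u ε)) :=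
    fun ε hε => contDiff_rotDeriv L (hus ε hε)
  have hm1 := moderate_rotDeriv L hus humod
  have hm2 := moderate_rotDeriv L hus1 hm1
  refine ⟨hm1, fun K hK q => ?_⟩
  obtain ⟨r, hr⟩ := exists_subset_euclBall hK
  obtain ⟨p, C, hC, e, he, hb⟩ := hm2 _ (isCompact_euclBall n r) 0
  obtain ⟨C', hC', e', he', δ, hδ, hu⟩ := uniform_of_pointwise h hus hinv r (2 * q + p + 1)
  refine ⟨C' + C, by positivity, min (min e e') (min δ 1), by positivity, ?_⟩
  intro ε h0 h1 x hx
  simp only [lt_min_iff] at h1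
  obtain ⟨⟨h1e, h1e'⟩, h1δ, h11⟩ := h1
  have hε : ε ∈ Set.Ioc (0:ℝ) 1 := ⟨h0, h11.le⟩
  have hder : ∀ f : (Fin n → ℝ) → ℝ, ContDiff ℝ (⊤ : ℕ∞) f → ∀ s,
      HasDerivAt (fun s => f (planeRot i j s *ᵥ x)) (rotDeriv L f (planeRot i j s *ᵥ x)) s := by
    intro f hf s
    exact ((hf.differentiable (by simp)) _).hasFDerivAt.comp_hasDerivAt s (hasDerivAt_rot h x s)
  -- The exponent is at least `1`, so the step is shorter than `δ`.
  have htδ : ε ^ (q + p + 1) < δ := by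
    refine lt_of_le_of_lt ?_ h1δ
    exact pow_le_of_le_one h0.le h11.le (by omega)
  have key := deriv_le_of_increment (hder _ (hus ε hε)) (hder _ (hus1 ε hε))
    (a := C' * ε ^ (2 * q + p + 1)) (B := C / ε ^ p) (t := ε ^ (q + p + 1)) (by positivity)
    (fun s => by
      simpa using hb ε h0 h1e _ (rot_mem_euclBall h s (hr hx)))
    (by
      simpa [rot_zero] using hu ε h0 h1e' _ (by positivity) htδ x (hr hx))
  simp only [rot_zero, one_mulVec] at key
  refine key.trans ?_
  have k1 : C' * ε ^ (2 * q + p + 1) / ε ^ (q + p + 1) = C' * ε ^ q := by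
    rw [div_eq_iff (by positivity)]
    ring
  have k2 : C / ε ^ p * ε ^ (q + p + 1) = C * ε ^ (q + 1) := by
    field_simp
    ring
  have k3 : ε ^ (q + 1) ≤ ε ^ q := pow_le_pow_of_le_one h0.le h11.le (by omega)
  rw [k1, k2]
  nlinarith
end

section
/- Let (u_ε) be a moderate net of smooth functions on ℝ² and for θ ∈ ℝ let R_θ ∈ SO(2,ℝ) denote the rotation by angle θ. Suppose that for every fixed θ ∈ ℝ the net x ↦ u_ε(R_θ x) − u_ε(x) is negligible on ℝ². Then for every compactly supported net (η_ε) of real numbers, the net x ↦ u_ε(R_{η_ε} x) − u_ε(x) is negligible on ℝ²; i.e. invariance under standard rotations of ℝ² implies invariance under all generalized rotations R_{η̃}. -/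
/-!
Baire category gives uniformity in the angle. Fix `m` and a closed Euclidean disc `D`, which every
rotation maps to itself. The angles `θ` for which `|u ε (R_θ x) - u ε x| ≤ (n + 1) ε ^ m` holds for
all `x ∈ D` and `ε < 1 / (n + 1)` form a closed set, and by hypothesis these sets cover `ℝ` as `n`
varies. So one of them contains an interval `(θ₀ - r, θ₀ + r)`. Since `R_{θ₀}` maps `D` onto `D`,
comparing the angles `θ₀ + t` and `θ₀` gives an estimate with constant `2 (n + 1)` for every
`|t| < r` (`exists_uniform_small_angle`). An angle bounded by `B` is a sum of a fixed number `N` of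
such small angles, so telescoping costs only the factor `N` (`abs_rot_nsmul_sub_le`).
Moderateness of the rotated net is immediate, because the operator norms of the rotations are
bounded and rotations preserve `D`.
-/

open Topology Filter Set Matrix

/-- The rotation of `ℝ²` by angle `θ`. -/
noncomputable def Rot (θ : ℝ) : Matrix (Fin 2) (Fin 2) ℝ :=
  !![Real.cos θ, -Real.sin θ; Real.sin θ, Real.cos θ]

/-- The closed Euclidean disc about the origin with squared radius `c`; the type `Fin 2 → ℝ` carries
the sup norm, whose balls are not invariant under rotations. -/
def euclDisc (c : ℝ) : Set (Fin 2 → ℝ) := {x | x 0 ^ 2 + x 1 ^ 2 ≤ c}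

lemma isCompact_euclDisc (c : ℝ) : IsCompact (euclDisc c) := by
  refine Metric.isCompact_of_isClosed_isBounded ?_ ?_
  · exact isClosed_le (by fun_prop) continuous_const
  · refine (Metric.isBounded_iff_subset_closedBall 0).2 ⟨√c, fun x hx => ?_⟩
    have hx' : x 0 ^ 2 + x 1 ^ 2 ≤ c := hx
    rw [mem_closedBall_zero_iff, pi_norm_le_iff_of_nonneg (Real.sqrt_nonneg _)]
    intro i
    rw [Real.norm_eq_abs]
    apply Real.abs_le_sqrt
    fin_cases i
    · simp only [Fin.zero_eta]; nlinarith [sq_nonneg (x 1)]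
    · simp only [Fin.mk_one]; nlinarith [sq_nonneg (x 0)]

lemma exists_subset_euclDisc {K : Set (Fin 2 → ℝ)} (hK : IsCompact K) :
    ∃ c, K ⊆ euclDisc c := by
  obtain ⟨c, hc⟩ := hK.bddAbove_image
    (f := fun x : Fin 2 → ℝ => x 0 ^ 2 + x 1 ^ 2) (by fun_prop)
  exact ⟨c, fun x hx => hc ⟨x, hx, rfl⟩⟩

lemma rot_mulVec_zero (θ : ℝ) (x : Fin 2 → ℝ) :
    (Rot θ).mulVec x 0 = Real.cos θ * x 0 - Real.sin θ * x 1 := by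
  simp [Rot, Matrix.mulVec, dotProduct, Fin.sum_univ_two, sub_eq_add_neg]

lemma rot_mulVec_one (θ : ℝ) (x : Fin 2 → ℝ) :
    (Rot θ).mulVec x 1 = Real.sin θ * x 0 + Real.cos θ * x 1 := by
  simp [Rot, Matrix.mulVec, dotProduct, Fin.sum_univ_two]

lemma rot_add_mulVec (a b : ℝ) (x : Fin 2 → ℝ) :
    (Rot (a + b)).mulVec x = (Rot a).mulVec ((Rot b).mulVec x) := by
  ext i
  fin_cases i
  · simp only [Fin.zero_eta, rot_mulVec_zero, rot_mulVec_one, Real.cos_add, Real.sin_add]; ring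
  · simp only [Fin.mk_one, rot_mulVec_zero, rot_mulVec_one, Real.cos_add, Real.sin_add]; ring

lemma rot_zero_mulVec (x : Fin 2 → ℝ) : (Rot 0).mulVec x = x := by
  ext i
  fin_cases i
  · simp [rot_mulVec_zero]
  · simp [rot_mulVec_one]

lemma rot_mem_euclDisc {c : ℝ} (θ : ℝ) {x : Fin 2 → ℝ} (hx : x ∈ euclDisc c) :
    (Rot θ).mulVec x ∈ euclDisc c := by
  have hx' : x 0 ^ 2 + x 1 ^ 2 ≤ c := hx
  change (Rot θ).mulVec x 0 ^ 2 + (Rot θ).mulVec x 1 ^ 2 ≤ c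
  rw [rot_mulVec_zero, rot_mulVec_one]
  calc _ = (Real.sin θ ^ 2 + Real.cos θ ^ 2) * (x 0 ^ 2 + x 1 ^ 2) := by ring
    _ ≤ c := by rwa [Real.sin_sq_add_cos_sq, one_mul]

lemma continuous_rot_mulVec (x : Fin 2 → ℝ) : Continuous fun θ => (Rot θ).mulVec x := by
  refine continuous_pi fun i => ?_
  fin_cases i
  · simp only [Fin.zero_eta, rot_mulVec_zero]; fun_prop
  · simp only [Fin.mk_one, rot_mulVec_one]; fun_prop

/-- The rotation by `θ` as a continuous linear map. -/
noncomputable def rotCLM (θ : ℝ) : (Fin 2 → ℝ) →L[ℝ] (Fin 2 → ℝ) :=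
  LinearMap.toContinuousLinearMap (Matrix.mulVecLin (Rot θ))

lemma rotCLM_apply (θ : ℝ) (x : Fin 2 → ℝ) : rotCLM θ x = (Rot θ).mulVec x := rfl

/-- The bound is `2` rather than `1` because the operator norm is taken for the sup norm. -/
lemma norm_rotCLM_le (θ : ℝ) : ‖rotCLM θ‖ ≤ 2 := by
  refine ContinuousLinearMap.opNorm_le_bound _ (by norm_num) fun x => ?_
  rw [pi_norm_le_iff_of_nonneg (by positivity)]
  have key : ∀ a b : ℝ, |a| ≤ 1 → |b| ≤ 1 → |a * x 0 + b * x 1| ≤ 2 * ‖x‖ := by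
    intro a b ha hb
    have h0 : |x 0| ≤ ‖x‖ := norm_le_pi_norm x 0
    have h1 : |x 1| ≤ ‖x‖ := norm_le_pi_norm x 1
    calc |a * x 0 + b * x 1| ≤ |a * x 0| + |b * x 1| := abs_add_le _ _
      _ = |a| * |x 0| + |b| * |x 1| := by rw [abs_mul, abs_mul]
      _ ≤ 1 * ‖x‖ + 1 * ‖x‖ := by gcongr
      _ = 2 * ‖x‖ := by ring
  intro i
  rw [Real.norm_eq_abs, rotCLM_apply]
  fin_cases i
  · simp only [Fin.zero_eta, rot_mulVec_zero]
    have := key (Real.cos θ) (-Real.sin θ) (Real.abs_cos_le_one θ)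
      (by rw [abs_neg]; exact Real.abs_sin_le_one θ)
    rwa [neg_mul, ← sub_eq_add_neg] at this
  · simp only [Fin.mk_one, rot_mulVec_one]
    exact key _ _ (Real.abs_sin_le_one θ) (Real.abs_cos_le_one θ)

/-- Telescoping: a rotation by `n * t` changes `f` at most `n` times as much as a rotation by `t`. -/
lemma abs_rot_nsmul_sub_le {f : (Fin 2 → ℝ) → ℝ} {c t δ : ℝ}
    (h : ∀ x ∈ euclDisc c, |f ((Rot t).mulVec x) - f x| ≤ δ) (n : ℕ) :
    ∀ x ∈ euclDisc c, |f ((Rot (n * t)).mulVec x) - f x| ≤ n * δ := by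
  induction n with
  | zero => intro x _; rw [Nat.cast_zero, zero_mul, zero_mul, rot_zero_mulVec, sub_self, abs_zero]
  | succ n ih =>
    intro x hx
    have h1 := h _ (rot_mem_euclDisc (n * t) hx)
    rw [← rot_add_mulVec] at h1
    have e : ((n + 1 : ℕ) : ℝ) * t = t + n * t := by push_cast; ring
    rw [e]
    calc _ ≤ _ := abs_sub_le _ (f ((Rot (n * t)).mulVec x)) _
      _ ≤ δ + n * δ := add_le_add h1 (ih x hx)
      _ = _ := by push_cast; ring

/-- The Baire category step: the estimates for individual angles hold uniformly for all
sufficiently small angles. -/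
lemma exists_uniform_small_angle (u : ℝ → (Fin 2 → ℝ) → ℝ)
    (hu : ∀ ε ∈ Set.Ioc (0:ℝ) 1, Continuous (u ε))
    (c : ℝ) (m : ℕ)
    (h : ∀ θ : ℝ, ∃ C > (0:ℝ), ∃ ε₀ > (0:ℝ), ∀ ε : ℝ, 0 < ε → ε < ε₀ → ∀ x ∈ euclDisc c,
      |u ε ((Rot θ).mulVec x) - u ε x| ≤ C * ε ^ m) :
    ∃ r > (0:ℝ), ∃ C > (0:ℝ), ∃ ε₀ > (0:ℝ), ∀ t : ℝ, |t| < r → ∀ ε : ℝ, 0 < ε → ε < ε₀ →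
      ∀ x ∈ euclDisc c, |u ε ((Rot t).mulVec x) - u ε x| ≤ C * ε ^ m := by
  let A : ℕ → Set ℝ := fun n => {θ | ∀ ε : ℝ, 0 < ε → ε < 1 / ((n : ℝ) + 1) → ∀ x ∈ euclDisc c,
      |u ε ((Rot θ).mulVec x) - u ε x| ≤ ((n : ℝ) + 1) * ε ^ m}
  have hA : ∀ n, IsClosed (A n) := by
    intro n
    simp only [A, Set.ofPred_forall]
    refine isClosed_iInter fun ε => isClosed_iInter fun h0 => isClosed_iInter fun h1 =>
      isClosed_iInter fun x => isClosed_iInter fun _ => ?_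
    have hn : 1 / ((n : ℝ) + 1) ≤ 1 := by
      rw [div_le_one (by positivity)]; linarith [Nat.cast_nonneg (α := ℝ) n]
    have hc := (hu ε ⟨h0, h1.le.trans hn⟩).comp (continuous_rot_mulVec x)
    exact isClosed_le ((hc.sub continuous_const).abs) continuous_const
  have hcov : ⋃ n, A n = univ := by
    refine eq_univ_of_forall fun θ => ?_
    obtain ⟨C, -, ε₀, hε₀, hC⟩ := h θ
    obtain ⟨n₁, hn₁⟩ := exists_nat_ge C
    obtain ⟨n₂, hn₂⟩ := exists_nat_one_div_lt hε₀
    refine mem_iUnion.2 ⟨max n₁ n₂, fun ε h0 h1 x hx => ?_⟩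
    have hm₁ : (n₁ : ℝ) ≤ (max n₁ n₂ : ℕ) := by exact_mod_cast le_max_left _ _
    have hm₂ : (n₂ : ℝ) ≤ (max n₁ n₂ : ℕ) := by exact_mod_cast le_max_right _ _
    have hlt : ε < ε₀ := by
      refine h1.trans_le (le_trans ?_ hn₂.le)
      exact one_div_le_one_div_of_le (by positivity) (by linarith)
    refine (hC ε h0 hlt x hx).trans ?_
    exact mul_le_mul_of_nonneg_right (by linarith) (by positivity)
  obtain ⟨n, θ₀, hθ₀⟩ := nonempty_interior_of_iUnion_of_closed hA hcov
  obtain ⟨r, hr, hball⟩ := Metric.isOpen_iff.1 isOpen_interior θ₀ hθ₀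
  refine ⟨r, hr, 2 * ((n : ℝ) + 1), by positivity, 1 / ((n : ℝ) + 1), by positivity, ?_⟩
  intro t ht ε h0 h1 x hx
  have hmem : θ₀ ∈ A n := interior_subset hθ₀
  have hmem' : t + θ₀ ∈ A n := interior_subset (hball (by simpa [Real.dist_eq] using ht))
  -- `x` is the image under `R_{θ₀}` of the point `R_{-θ₀} x`, which also lies in the disc.
  have hy := rot_mem_euclDisc (-θ₀) hx
  have e1 := hmem ε h0 h1 _ hy
  have e2 := hmem' ε h0 h1 _ hy
  rw [← rot_add_mulVec, add_neg_cancel, rot_zero_mulVec] at e1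
  rw [← rot_add_mulVec, add_neg_cancel_right] at e2
  rw [abs_sub_comm] at e1
  calc _ ≤ _ := abs_sub_le _ (u ε ((Rot (-θ₀)).mulVec x)) _
    _ ≤ _ := add_le_add e2 e1
    _ = _ := by ring

lemma moderateF_rot_sub (u : ℝ → (Fin 2 → ℝ) → ℝ)
    (hus : ∀ ε ∈ Set.Ioc (0:ℝ) 1, ContDiff ℝ (⊤ : ℕ∞) (u ε))
    (humod : ModerateF u) (η : ℝ → ℝ) :
    ModerateF (fun ε x => u ε ((Rot (η ε)).mulVec x) - u ε x) := by
  intro K hK k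
  obtain ⟨c, hc⟩ := exists_subset_euclDisc hK
  obtain ⟨p, C, hC, ε₀, hε₀, hb⟩ := humod _ (isCompact_euclDisc c) k
  refine ⟨p, C * 2 ^ k + C, by positivity, min ε₀ 1, by positivity, ?_⟩
  intro ε h0 h1 x hx
  have hlt : ε < ε₀ := h1.trans_le (min_le_left _ _)
  have hk : ContDiff ℝ k (u ε) :=
    (hus ε ⟨h0, (h1.trans_le (min_le_right _ _)).le⟩).of_le (by exact_mod_cast le_top)
  have hcomp : ContDiff ℝ k (u ε ∘ rotCLM (η ε)) := hk.comp (rotCLM (η ε)).contDiff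
  change ‖iteratedFDeriv ℝ k (u ε ∘ rotCLM (η ε) - u ε) x‖ ≤ _
  rw [iteratedFDeriv_sub_apply hcomp.contDiffAt hk.contDiffAt]
  have hxc := hc hx
  have b1 : ‖iteratedFDeriv ℝ k (u ε ∘ rotCLM (η ε)) x‖ ≤ C / ε ^ p * 2 ^ k := by
    rw [(rotCLM (η ε)).iteratedFDeriv_comp_right hk x le_rfl]
    refine (ContinuousMultilinearMap.norm_compContinuousLinearMap_le _ _).trans ?_
    rw [Finset.prod_const, Finset.card_univ, Fintype.card_fin]
    have hR := hb ε h0 hlt _ (rot_mem_euclDisc (η ε) hxc)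
    exact mul_le_mul hR (pow_le_pow_left₀ (norm_nonneg _) (norm_rotCLM_le _) k)
      (by positivity) (by positivity)
  calc _ ≤ _ := norm_sub_le _ _
    _ ≤ _ := add_le_add b1 (hb ε h0 hlt x hxc)
    _ = _ := by ring

/-- if a moderate net `(u_ε)` of smooth functions on `ℝ²` is invariant
under every fixed standard rotation `R_θ`, then it is invariant under all generalized
rotations `R_{η̃}` given by compactly supported (i.e. bounded for small `ε`) nets of
angles. -/
theorem stmt14
    (u : ℝ → (Fin 2 → ℝ) → ℝ)
    (hus : ∀ ε ∈ Set.Ioc (0:ℝ) 1, ContDiff ℝ (⊤ : ℕ∞) (u ε))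
    (humod : ModerateF u)
    (hinv : ∀ θ : ℝ, NegligibleF (fun ε x => u ε ((Rot θ).mulVec x) - u ε x)) :
    ∀ η : ℝ → ℝ, (∃ B : ℝ, ∃ ε₀ > (0:ℝ), ∀ ε : ℝ, 0 < ε → ε < ε₀ → |η ε| ≤ B) →
      NegligibleF (fun ε x => u ε ((Rot (η ε)).mulVec x) - u ε x) := by
  rintro η ⟨B, ε₁, hε₁, hB⟩
  refine ⟨moderateF_rot_sub u hus humod η, fun K hK m => ?_⟩
  obtain ⟨c, hc⟩ := exists_subset_euclDisc hK
  obtain ⟨r, hr, C, hC, ε₀, hε₀, h⟩ := exists_uniform_small_angle u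
    (fun ε hε => (hus ε hε).continuous) c m
    (fun θ => (hinv θ).2 _ (isCompact_euclDisc c) m)
  obtain ⟨n, hn⟩ := exists_nat_gt (B / r)
  -- `n + 1` steps of size `η ε / (n + 1)`: a positive number of steps without first proving `0 ≤ B`.
  have hN : (0:ℝ) < ((n + 1 : ℕ) : ℝ) := by positivity
  refine ⟨((n + 1 : ℕ) : ℝ) * C, by positivity, min ε₀ ε₁, lt_min hε₀ hε₁, ?_⟩
  intro ε h0 h1 x hx
  have hsmall : |η ε / ((n + 1 : ℕ) : ℝ)| < r := by
    rw [abs_div, abs_of_pos hN, div_lt_iff₀ hN]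
    have h2 := hB ε h0 (h1.trans_le (min_le_right _ _))
    rw [div_lt_iff₀ hr] at hn
    push_cast
    linarith
  have h3 := abs_rot_nsmul_sub_le (f := u ε)
    (h _ hsmall ε h0 (h1.trans_le (min_le_left _ _))) (n + 1) x (hc hx)
  rw [mul_div_cancel₀ _ hN.ne'] at h3
  rwa [mul_assoc]
end

section
/- There exist a compactly supported smooth function φ ∈ C_c^∞(ℝ²) and a rotation A ∈ SO(2,ℝ) such that, setting u_ε(x) = φ(x/ε) for ε ∈ (0,1]: (a) the net (u_ε) is moderate; (b) for every compact K ⊆ ℝ² \ {0} there is ε₀ > 0 with u_ε ≡ 0 on K for all ε < ε₀ (so the corresponding Colombeau generalized function is supported in {0}); and (c) the net x ↦ u_ε(Ax) − u_ε(x) is not negligible: indeed there exist a compactly supported point net (x_ε) in ℝ² and a constant c > 0 with |u_ε(Ax_ε) − u_ε(x_ε)| ≥ c for all small ε. Hence rotational invariance of a Colombeau function on ℝ² \ {0} does not imply rotational invariance on ℝ². -/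
/-!
The idea is that the net `φ (x / ε)` never forgets the shape of `φ`: it only concentrates it near
the origin. Choose for `φ` a smooth bump around the point `(1, 0)` whose support misses
`(-1, 0)`, and for the rotation the half-turn `-1`. Along the point net `ε • (1, 0)`, which
converges to the origin, the rotated function takes the value `φ (-1, 0) = 0` and the original one
takes the value `φ (1, 0) = 1`, so the difference does not even tend to zero.

Moderateness comes from the chain rule: the `k`-th derivative of `φ (x / ε)` is `ε ^ (-k)` times
the `k`-th derivative of `φ` at `x / ε`, which is bounded because `φ` has compact support
(`moderateF_scaled`). Since the support of `φ` is bounded and a compact set avoiding the origin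
has positive distance to it, the dilated arguments eventually leave the support
(`scaled_eventually_zero`).
-/

open Topology Filter Set Matrix

theorem moderateF_scaled {E : Type*} [NormedAddCommGroup E] [NormedSpace ℝ E] {φ : E → ℝ}
    (hφ : ContDiff ℝ (⊤ : ℕ∞) φ) (hc : HasCompactSupport φ) :
    ModerateF (fun ε (x : E) => φ (ε⁻¹ • x)) := by
  intro K _ k
  have hk : ContDiff ℝ k φ := hφ.of_le (by exact_mod_cast le_top)
  obtain ⟨C, hC⟩ := (hc.iteratedFDeriv (𝕜 := ℝ) k).exists_bound_of_continuous
    (hk.continuous_iteratedFDeriv le_rfl)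
  -- `|C| + 1` instead of `C`, since the constant has to be positive.
  refine ⟨k, |C| + 1, by positivity, 1, one_pos, fun ε hε _ x _ => ?_⟩
  have hscale : iteratedFDeriv ℝ k (fun x : E => φ (ε⁻¹ • x)) x
      = ε⁻¹ ^ k • iteratedFDeriv ℝ k φ (ε⁻¹ • x) := by
    rw [iteratedFDeriv_comp_const_smul _ hk]
  rw [hscale, norm_smul, norm_pow, norm_inv, Real.norm_of_nonneg hε.le, inv_pow, inv_mul_eq_div]
  gcongr
  exact (hC _).trans ((le_abs_self C).trans (by linarith))

theorem scaled_eventually_zero {E : Type*} [NormedAddCommGroup E] [NormedSpace ℝ E] {φ : E → ℝ}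
    (hc : HasCompactSupport φ) {K : Set E} (hK : IsCompact K) (h0 : (0 : E) ∉ K) :
    ∃ ε₀ > (0 : ℝ), ∀ ε : ℝ, 0 < ε → ε < ε₀ → ∀ x ∈ K, φ (ε⁻¹ • x) = 0 := by
  obtain ⟨R, hR, hsub⟩ := hc.isCompact.isBounded.subset_ball_lt 0 0
  obtain ⟨r, hr, hdisj⟩ := Metric.isOpen_iff.1 hK.isClosed.isOpen_compl 0 h0
  refine ⟨r / R, by positivity, fun ε hε hlt x hx => ?_⟩
  by_contra hne
  have hx1 : ‖ε⁻¹ • x‖ < R := by simpa using hsub (subset_tsupport φ hne)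
  have hx2 : r ≤ ‖x‖ := by
    by_contra! hlt
    exact hdisj (by simpa using hlt) hx
  rw [norm_smul, norm_inv, Real.norm_of_nonneg hε.le, inv_mul_lt_iff₀ hε] at hx1
  rw [lt_div_iff₀ hR] at hlt
  linarith

/-- there exist `φ ∈ C_c^∞(ℝ²)` and `A ∈ SO(2,ℝ)` such that the net
`u_ε(x) = φ(x/ε)` is (a) moderate, (b) identically zero, for small `ε`, on each compact
set not containing the origin (so the corresponding Colombeau function is supported in
`{0}`), yet (c) `x ↦ u_ε(Ax) - u_ε(x)` is not negligible: it is bounded below by a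
positive constant along some compactly supported point net. -/
theorem stmt15 :
    ∃ (φ : (Fin 2 → ℝ) → ℝ) (A : Matrix (Fin 2) (Fin 2) ℝ),
      ContDiff ℝ (⊤ : ℕ∞) φ ∧ HasCompactSupport φ ∧ Aᵀ * A = 1 ∧ A.det = 1 ∧
      (ModerateF (fun ε (x : Fin 2 → ℝ) => φ (ε⁻¹ • x))) ∧
      (∀ K : Set (Fin 2 → ℝ), IsCompact K → (0 : Fin 2 → ℝ) ∉ K →
        ∃ ε₀ > (0:ℝ), ∀ ε : ℝ, 0 < ε → ε < ε₀ → ∀ x ∈ K, φ (ε⁻¹ • x) = 0) ∧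
      (∃ x : ℝ → (Fin 2 → ℝ),
        (∃ K : Set (Fin 2 → ℝ), IsCompact K ∧ ∃ ε₀ > (0:ℝ), ∀ ε : ℝ, 0 < ε → ε < ε₀ →
          x ε ∈ K) ∧
        ∃ c > (0:ℝ), ∃ ε₀ > (0:ℝ), ∀ ε : ℝ, 0 < ε → ε < ε₀ →
          c ≤ |φ (ε⁻¹ • A.mulVec (x ε)) - φ (ε⁻¹ • x ε)|) := by
  let p : Fin 2 → ℝ := ![1, 0]
  let φ : ContDiffBump p := ⟨1 / 4, 1 / 2, by norm_num, by norm_num⟩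
  refine ⟨φ, -1, φ.contDiff, φ.hasCompactSupport, by simp, by simp [Matrix.det_fin_two],
    moderateF_scaled φ.contDiff φ.hasCompactSupport,
    fun K hK h0 => scaled_eventually_zero φ.hasCompactSupport hK h0, fun ε => ε • p,
    ⟨Metric.closedBall 0 ‖p‖, isCompact_closedBall _ _, 1, one_pos, fun ε hε hlt => ?_⟩,
    1, one_pos, 1, one_pos, fun ε hε _ => ?_⟩
  · rw [mem_closedBall_zero_iff, norm_smul, Real.norm_of_nonneg hε.le]
    exact mul_le_of_le_one_left (norm_nonneg _) hlt.le
  · have h1 : φ p = 1 := φ.one_of_mem_closedBall (Metric.mem_closedBall_self φ.rIn_pos.le)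
    have h2 : φ (-p) = 0 := by
      apply φ.zero_of_le_dist
      -- The first coordinates of `-p` and `p` differ by `2`, and `dist` is the sup distance.
      have h : dist ((-p) 0) (p 0) ≤ dist (-p) p := dist_le_pi_dist (-p) p 0
      have h' : dist ((-p) 0) (p 0) = 2 := by
        simp [p, Real.dist_eq]
        norm_num
      change (1 / 2 : ℝ) ≤ _
      linarith
    have h3 : ε⁻¹ • (ε • p) = p := inv_smul_smul₀ hε.ne' p
    rw [Matrix.neg_mulVec, Matrix.one_mulVec, smul_neg, h3, h1, h2]
    norm_num
end

section
/- Let (u_ε)_{ε∈(0,1]} be a moderate net of smooth functions on ℝ^n such that for every compact K ⊆ ℝ^n and every m ∈ ℕ, sup_{x∈K}|u_ε(x)| = O(ε^m) as ε → 0 (zeroth-order negligibility). Then all derivatives satisfy the same estimates: for every compact K ⊆ ℝ^n, every multi-index α and every m ∈ ℕ, sup_{x∈K}|∂^α u_ε(x)| = O(ε^m) as ε → 0. Hence in the definition of the negligibility ideal of the Colombeau algebra it suffices to estimate the zeroth-order derivative. -/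
/-!
The argument is Landau's interpolation inequality between a function and its first two
derivatives: on a ball of radius `h`, Taylor's formula gives `‖g'(x)‖ ≤ 2A/h + Bh` whenever
`‖g‖ ≤ A` and `‖g''‖ ≤ B` there (`norm_fderiv_le_of_landau`). It is applied by induction on the
order `k`, with `g` the `k`-th derivative of `u ε` (`norm_iteratedFDeriv_succ_le`). On the closed
`1`-neighbourhood of `K`, moderateness provides `B = C₂ ε^(-p)`, and the induction hypothesis
provides `A = C₁ ε^(2m+p)`. The choice `h = ε^(m+p)` then balances both terms at order `ε^m`.
-/

open Topology Filter Set

/-- Landau's inequality, with the bound on the second derivative replaced by the bound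
`‖g'(z) - g'(x)‖ ≤ B h` that it implies on a ball of radius `h`. -/
lemma norm_fderiv_le_of_landau {E F : Type*} [NormedAddCommGroup E] [NormedSpace ℝ E]
    [NormedAddCommGroup F] [NormedSpace ℝ F] {g : E → F} (hg : Differentiable ℝ g)
    {x : E} {h A B : ℝ} (hh : 0 < h) (hB : 0 ≤ B)
    (hA : ∀ z ∈ Metric.closedBall x h, ‖g z‖ ≤ A)
    (hd : ∀ z ∈ Metric.closedBall x h, ‖fderiv ℝ g z - fderiv ℝ g x‖ ≤ B * h) :
    ‖fderiv ℝ g x‖ ≤ 2 * A / h + B * h := by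
  have hx : x ∈ Metric.closedBall x h := Metric.mem_closedBall_self hh.le
  have hA0 : 0 ≤ A := (norm_nonneg _).trans (hA x hx)
  refine ContinuousLinearMap.opNorm_le_of_unit_norm (by positivity) fun v hv => ?_
  have hn : ‖h • v‖ = h := by rw [norm_smul, hv, mul_one, Real.norm_of_nonneg hh.le]
  have hy : x + h • v ∈ Metric.closedBall x h := by
    rw [mem_closedBall_iff_norm, add_sub_cancel_left, hn]
  have hmv := (convex_closedBall x h).norm_image_sub_le_of_norm_fderiv_le'
    (fun z _ => hg z) hd hx hy
  rw [add_sub_cancel_left, hn, map_smul] at hmv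
  have hmul : h * ‖fderiv ℝ g x v‖ ≤ B * h * h + (A + A) := by
    calc h * ‖fderiv ℝ g x v‖ = ‖h • fderiv ℝ g x v‖ := by
          rw [norm_smul, Real.norm_of_nonneg hh.le]
      _ ≤ ‖g (x + h • v) - g x - h • fderiv ℝ g x v‖ + ‖g (x + h • v) - g x‖ := by
          rw [norm_sub_rev (g (x + h • v) - g x)]
          exact norm_le_norm_sub_add _ _
      _ ≤ B * h * h + (A + A) :=
          add_le_add hmv ((norm_sub_le _ _).trans (add_le_add (hA _ hy) (hA _ hx)))
  have heq : 2 * A / h + B * h = (B * h * h + (A + A)) / h := by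
    field_simp
    ring
  rw [heq, le_div_iff₀ hh]
  linarith

/-- Landau's inequality for consecutive iterated derivatives of a smooth function. -/
lemma norm_iteratedFDeriv_succ_le {E : Type*} [NormedAddCommGroup E] [NormedSpace ℝ E]
    {f : E → ℝ} (hf : ContDiff ℝ (⊤ : ℕ∞) f) (k : ℕ) {x : E} {h A B : ℝ}
    (hh : 0 < h) (hB : 0 ≤ B)
    (hA : ∀ z ∈ Metric.closedBall x h, ‖iteratedFDeriv ℝ k f z‖ ≤ A)
    (hd : ∀ z ∈ Metric.closedBall x h, ‖iteratedFDeriv ℝ (k + 2) f z‖ ≤ B) :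
    ‖iteratedFDeriv ℝ (k + 1) f x‖ ≤ 2 * A / h + B * h := by
  have hdiff (j : ℕ) : Differentiable ℝ (iteratedFDeriv ℝ j f) :=
    hf.differentiable_iteratedFDeriv (by exact_mod_cast ENat.natCast_lt_top j)
  rw [← norm_fderiv_iteratedFDeriv]
  refine norm_fderiv_le_of_landau (hdiff k) hh hB hA fun z hz => ?_
  -- The derivative of the `k`-th iterated derivative is the `(k+1)`-st one up to a linear isometry.
  rw [fderiv_iteratedFDeriv, Function.comp_apply, Function.comp_apply, ← LinearIsometryEquiv.map_sub,
    LinearIsometryEquiv.norm_map]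
  refine ((convex_closedBall x h).norm_image_sub_le_of_norm_fderiv_le
    (fun z _ => hdiff (k + 1) z) (fun w hw => ?_) (Metric.mem_closedBall_self hh.le) hz).trans
    (mul_le_mul_of_nonneg_left (mem_closedBall_iff_norm.1 hz) hB)
  rw [norm_fderiv_iteratedFDeriv]
  exact hd w hw

/-- if a moderate net `(u_ε)` of smooth functions on `ℝ^n` satisfies the
zeroth-order negligibility estimates (`sup_K |u_ε| = O(ε^m)` for all compact `K` and all
`m`), then all its derivatives satisfy the same estimates; hence in the definition of
the negligibility ideal of the Colombeau algebra it suffices to estimate the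
zeroth-order derivative. -/
theorem stmt19 {n : ℕ}
    (u : ℝ → (Fin n → ℝ) → ℝ)
    (hus : ∀ ε ∈ Set.Ioc (0:ℝ) 1, ContDiff ℝ (⊤ : ℕ∞) (u ε))
    (humod : ModerateF u)
    (h0 : ∀ K : Set (Fin n → ℝ), IsCompact K → ∀ m : ℕ,
      ∃ C > (0:ℝ), ∃ ε₀ > (0:ℝ), ∀ ε : ℝ, 0 < ε → ε < ε₀ →
        ∀ x ∈ K, |u ε x| ≤ C * ε ^ m) :
    ∀ K : Set (Fin n → ℝ), IsCompact K → ∀ k : ℕ, ∀ m : ℕ,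
      ∃ C > (0:ℝ), ∃ ε₀ > (0:ℝ), ∀ ε : ℝ, 0 < ε → ε < ε₀ →
        ∀ x ∈ K, ‖iteratedFDeriv ℝ k (u ε) x‖ ≤ C * ε ^ m := by
  intro K hK k
  induction k generalizing K with
  | zero => simpa only [norm_iteratedFDeriv_zero, Real.norm_eq_abs] using h0 K hK
  | succ k ih =>
    intro m
    have hK' : IsCompact (Metric.cthickening 1 K) := hK.cthickening
    obtain ⟨p, C₂, hC₂, ε₂, hε₂, hB⟩ := humod _ hK' (k + 2)
    obtain ⟨C₁, hC₁, ε₁, hε₁, hA⟩ := ih _ hK' (2 * m + p)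
    refine ⟨2 * C₁ + C₂, by positivity, min 1 (min ε₁ ε₂), by positivity, ?_⟩
    intro ε hε hlt x hx
    obtain ⟨hlt1, hlt2⟩ := lt_min_iff.1 hlt
    obtain ⟨hlt2, hlt3⟩ := lt_min_iff.1 hlt2
    have hsub : Metric.closedBall x (ε ^ (m + p)) ⊆ Metric.cthickening 1 K :=
      (Metric.closedBall_subset_closedBall (pow_le_one₀ hε.le hlt1.le)).trans
        (Metric.closedBall_subset_cthickening hx 1)
    refine (norm_iteratedFDeriv_succ_le (hus ε ⟨hε, hlt1.le⟩) k (pow_pos hε (m + p))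
      (by positivity) (fun z hz => hA ε hε hlt2 z (hsub hz))
      (fun z hz => hB ε hε hlt3 z (hsub hz))).trans_eq ?_
    field_simp
    ring
end
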